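/- There exists a constant C_0 > 0 with the following property. Let N, \omega be positive integers and \lambda_1, ..., \lambda_N reals such that any integer relation u_1\lambda_1 + ... + u_N\lambda_N = 0 with max |u_\ell| \le 6\omega \log(N\omega/C_0) forces u_1 = ... = u_N = 0. Set \Xi = \min |\sum_k \lambda_k u_k| over integer vectors (u_k) with |u_k| \le 6\omega\log(N\omega/C_0) and \sum_k \lambda_k u_k \ne 0. If T > (3/(\pi\Xi)) ((2\sqrt{3}\omega/C_0)\sqrt{\log(N\omega/C_0)})^N, then for any reals d, \beta_1, ..., \beta_N there exists t \in [d, d+T] with \max_{1\le j\le N} \|t\lambda_j - \beta_j\| \le 1/\omega. -/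

import Mathlib

/-- Distance from a real number to the nearest integer. -/
noncomputable def nearestIntDist (x : ℝ) : ℝ := |x - round x|

namespace LocKron

open Complex in
/-- The additive character. -/
noncomputable def ee (x : ℝ) : ℂ := Complex.exp (((2 * Real.pi * x : ℝ) : ℂ) * Complex.I)

lemma ee_zero : ee 0 = 1 := by simp [ee]

lemma ee_add (x y : ℝ) : ee (x + y) = ee x * ee y := by
  simp only [ee]; rw [← Complex.exp_add]; congr 1; push_cast; ring

lemma ee_sum {J : Type*} (s : Finset J) (x : J → ℝ) : ee (∑ j ∈ s, x j) = ∏ j ∈ s, ee (x j) := by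
  classical
  induction s using Finset.induction_on with
  | empty => simp [ee_zero]
  | insert a s ha ih => rw [Finset.sum_insert ha, Finset.prod_insert ha, ee_add, ih]

lemma norm_ee (x : ℝ) : ‖ee x‖ = 1 := by
  simp only [ee]; exact Complex.norm_exp_ofReal_mul_I _

lemma continuous_ee : Continuous ee := by
  unfold ee; fun_prop

lemma ee_neg (x : ℝ) : ee (-x) = (starRingEnd ℂ) (ee x) := by
  simp only [ee]; rw [← Complex.exp_conj]; congr 1
  rw [map_mul, Complex.conj_ofReal, Complex.conj_I]; push_cast; ring

lemma ee_re (x : ℝ) : (ee x).re = Real.cos (2 * Real.pi * x) := by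
  simp only [ee]; exact Complex.exp_ofReal_mul_I_re _

lemma ee_int (k : ℤ) : ee k = 1 := by
  simp only [ee]; rw [Complex.exp_eq_one_iff]; exact ⟨k, by push_cast; ring⟩

lemma integral_ee (a b p q : ℝ) (ha : a ≠ 0) :
    ∫ t in p..q, ee (a * t + b) = (ee (a * q + b) - ee (a * p + b)) / (2 * Real.pi * a * Complex.I) := by
  have hc : ((2 * Real.pi * a : ℝ) : ℂ) * Complex.I ≠ 0 := by
    simp [ha, Real.pi_ne_zero]
  have h : ∀ t : ℝ, ee (a * t + b) = ee b * Complex.exp ((((2 * Real.pi * a : ℝ) : ℂ) * Complex.I) * t) := by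
    intro t
    simp only [ee]; rw [← Complex.exp_add]; congr 1; push_cast; ring
  simp only [h]
  rw [intervalIntegral.integral_const_mul, integral_exp_mul_complex hc]
  push_cast
  ring

lemma norm_integral_ee_le (a b p q X : ℝ) (hX : 0 < X) (ha : X ≤ |a|) :
    ‖∫ t in p..q, ee (a * t + b)‖ ≤ 1 / (Real.pi * X) := by
  have ha0 : a ≠ 0 := by
    rintro rfl; simp at ha; linarith
  rw [integral_ee _ _ _ _ ha0, norm_div]
  have h1 : ‖ee (a * q + b) - ee (a * p + b)‖ ≤ 2 := by
    refine (norm_sub_le _ _).trans ?_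
    rw [norm_ee, norm_ee]; norm_num
  have h2 : ‖(2 * Real.pi * a * Complex.I : ℂ)‖ = 2 * Real.pi * |a| := by
    simp [abs_of_pos Real.pi_pos]
  rw [h2]
  have hpi := Real.pi_pos
  calc _ ≤ 2 / (2 * Real.pi * X) := by gcongr
    _ = _ := by field_simp

lemma mean_bound {J I : Type*} [Fintype J] [DecidableEq J] [Fintype I] (f : I → ℤ) (G : ℝ → ℝ)
    (hG : ∀ x, (G x : ℂ) = ∑ i, ee (f i * x)) (M : ℝ) (hf : ∀ i, |(f i : ℝ)| ≤ M)
    (lam β : J → ℝ) (X : ℝ) (hX : 0 < X)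
    (h : ∀ v : J → ℤ, (∀ j, |(v j : ℝ)| ≤ M) → v ≠ 0 → X ≤ |∑ j, lam j * v j|) (d T : ℝ) :
    |(∫ t in d..(d + T), ∏ j, G (t * lam j - β j)) -
      ((Finset.univ.filter (fun i => f i = 0)).card : ℝ) ^ Fintype.card J * T|
      ≤ (Fintype.card I : ℝ) ^ Fintype.card J / (Real.pi * X) := by
  classical
  rw [← Real.norm_eq_abs, ← Complex.norm_real]
  push_cast
  have e1 : ((∫ t in d..(d + T), ∏ j, G (t * lam j - β j) : ℝ) : ℂ) =
      ∑ u : J → I, ∫ t in d..(d + T), ee ((∑ j, lam j * f (u j)) * t + (- ∑ j, β j * f (u j))) := by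
    rw [← intervalIntegral.integral_ofReal, ← intervalIntegral.integral_finsetSum]
    · congr 1
      ext t
      push_cast
      simp only [hG]
      rw [Finset.prod_univ_sum, Fintype.piFinset_univ]
      refine Finset.sum_congr rfl fun u _ => ?_
      rw [← ee_sum]
      congr 1
      rw [← sub_eq_add_neg, Finset.sum_mul, ← Finset.sum_sub_distrib]
      refine Finset.sum_congr rfl fun j _ => ?_
      ring
    · intro u _
      apply Continuous.intervalIntegrable
      exact continuous_ee.comp (by fun_prop)
  have e2 : (((Finset.univ.filter (fun i => f i = 0)).card : ℂ) ^ Fintype.card J * T) =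
      ∑ u : J → I, (if (∀ j, f (u j) = 0) then (T : ℂ) else 0) := by
    rw [← Finset.sum_filter, Finset.sum_const, nsmul_eq_mul]
    congr 1
    have : (Finset.univ.filter (fun u : J → I => ∀ j, f (u j) = 0)) =
        Fintype.piFinset (fun _ : J => Finset.univ.filter (fun i => f i = 0)) := by
      ext u; simp
    rw [this, Fintype.card_piFinset]
    simp
  rw [e1, e2, ← Finset.sum_sub_distrib]
  refine (norm_sum_le _ _).trans ?_
  calc _ ≤ ∑ u : J → I, 1 / (Real.pi * X) := by
        refine Finset.sum_le_sum fun u _ => ?_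
        split_ifs with hu
        · simp only [hu]
          simp [ee_zero]
          positivity
        · rw [sub_zero]
          apply norm_integral_ee_le _ _ _ _ _ hX
          refine h (fun j => f (u j)) (fun j => hf _) ?_
          intro h0
          exact hu fun j => congrFun h0 j
    _ = _ := by
        rw [Finset.sum_const, nsmul_eq_mul]
        simp
        ring

lemma main_abs {I : Type*} [Fintype I] (f : I → ℤ) (G : ℝ → ℝ)
    (hG : ∀ x, (G x : ℂ) = ∑ i, ee (f i * x)) (M : ℝ) (hM : 0 ≤ M) (hf : ∀ i, |(f i : ℝ)| ≤ M)
    (hGc : Continuous G) (hG0 : ∀ x, 0 ≤ G x)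
    (N : ℕ) (hN : 0 < N) (lam : Fin N → ℝ) (X : ℝ) (hX : 0 < X)
    (h : ∀ v : Fin N → ℤ, (∀ j, |(v j : ℝ)| ≤ M) → v ≠ 0 → X ≤ |∑ j, lam j * v j|)
    (c : ℝ) (hc : c = ((Finset.univ.filter (fun i => f i = 0)).card : ℝ)) (hc0 : 0 < c)
    (δ ε : ℝ) (hε0 : 0 ≤ ε) (hε : N * ε ≤ c / 2) (hGε : ∀ x, δ < nearestIntDist x → G x ≤ ε)
    (T : ℝ) (hT : 3 / (Real.pi * X) * ((Fintype.card I : ℝ) / c) ^ N < T) (d : ℝ) (β : Fin N → ℝ) :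
    ∃ t ∈ Set.Icc d (d + T), ∀ j, nearestIntDist (t * lam j - β j) ≤ δ := by
  classical
  by_contra! hcon
  set m : ℝ := (Fintype.card I : ℝ) with hm
  have hcm : c ≤ m := by
    rw [hc, hm]; exact_mod_cast Finset.card_le_univ _
  have hpi := Real.pi_pos
  have hm0 : 0 < m := hc0.trans_le hcm
  have hT0 : 0 < T := lt_of_le_of_lt (by positivity) hT
  have A := mean_bound f G hG M hf lam β X hX h d T
  have B : ∀ j : Fin N, |(∫ t in d..(d + T), ∏ i : {i // i ≠ j}, G (t * lam i - β i)) -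
      c ^ (N - 1) * T| ≤ m ^ (N - 1) / (Real.pi * X) := by
    intro j
    have := mean_bound (J := {i // i ≠ j}) f G hG M hf (fun i => lam i) (fun i => β i) X hX (by
      intro v hv hv0
      let w : Fin N → ℤ := fun i => if hi : i ≠ j then v ⟨i, hi⟩ else 0
      have hw : ∀ i : {i // i ≠ j}, w i = v i := by
        intro i; simp only [w]; rw [dif_pos i.2]
      have hwj : w j = 0 := by simp [w]
      have := h w (by
        intro i
        by_cases hi : i = j
        · subst hi; rw [hwj]; simpa using hM
        · rw [hw ⟨i, hi⟩]; exact hv _) (by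
        intro h0
        apply hv0
        ext i
        rw [← hw i, h0]; rfl)
      rw [Fintype.sum_eq_add_sum_subtype_ne _ j, hwj] at this
      simpa [hw] using this) d T
    simpa [← hc, ← hm] using this
  rw [← hc, ← hm, Fintype.card_fin] at A
  have hcont : ∀ j : Fin N, Continuous fun t => ∏ i : {i // i ≠ j}, G (t * lam i - β i) := by
    intro j
    exact continuous_finsetProd _ fun i _ => hGc.comp (by fun_prop)
  have C : (∫ t in d..(d + T), ∏ j, G (t * lam j - β j)) ≤
      ∫ t in d..(d + T), ∑ j : Fin N, ε * ∏ i : {i // i ≠ j}, G (t * lam i - β i) := by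
    apply intervalIntegral.integral_mono_on (by linarith)
    · apply Continuous.intervalIntegrable
      exact continuous_finsetProd _ fun i _ => hGc.comp (by fun_prop)
    · apply Continuous.intervalIntegrable
      exact continuous_finsetSum _ fun i _ => continuous_const.mul (hcont i)
    · intro t ht
      obtain ⟨j, hj⟩ := hcon t ht
      have hnn : ∀ j : Fin N, 0 ≤ ∏ i : {i // i ≠ j}, G (t * lam i - β i) :=
        fun j => Finset.prod_nonneg fun i _ => hG0 _
      rw [Fintype.prod_eq_mul_prod_subtype_ne _ j]
      calc _ ≤ ε * ∏ i : {i // i ≠ j}, G (t * lam i - β i) :=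
            mul_le_mul_of_nonneg_right (hGε _ hj) (hnn j)
        _ ≤ _ := Finset.single_le_sum (f := fun j => ε * ∏ i : {i // i ≠ j}, G (t * lam i - β i))
            (fun i _ => mul_nonneg hε0 (hnn i)) (Finset.mem_univ j)
  rw [intervalIntegral.integral_finsetSum] at C
  swap
  · intro j _
    exact (continuous_const.mul (hcont j)).intervalIntegrable _ _
  have D : ∑ j : Fin N, (∫ t in d..(d + T), ε * ∏ i : {i // i ≠ j}, G (t * lam i - β i)) ≤
      N * ε * (c ^ (N - 1) * T + m ^ (N - 1) / (Real.pi * X)) := by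
    calc _ ≤ ∑ j : Fin N, ε * (c ^ (N - 1) * T + m ^ (N - 1) / (Real.pi * X)) := by
          refine Finset.sum_le_sum fun j _ => ?_
          rw [intervalIntegral.integral_const_mul]
          have := (abs_le.mp (B j)).2
          exact mul_le_mul_of_nonneg_left (by linarith) hε0
      _ = _ := by simp; ring
  have E : N * ε * (c ^ (N - 1) * T + m ^ (N - 1) / (Real.pi * X)) ≤
      c / 2 * (c ^ (N - 1) * T + m ^ (N - 1) / (Real.pi * X)) :=
    mul_le_mul_of_nonneg_right hε (by positivity)
  have F1 : c * c ^ (N - 1) = c ^ N := by rw [← pow_succ', Nat.sub_add_cancel hN]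
  have F2 : c * m ^ (N - 1) ≤ m ^ N := by
    calc c * m ^ (N - 1) ≤ m * m ^ (N - 1) := by gcongr
      _ = m ^ N := by rw [← pow_succ', Nat.sub_add_cancel hN]
  have A1 := (abs_le.mp A).1
  have F3 : c * (m ^ (N - 1) / (Real.pi * X)) ≤ m ^ N / (Real.pi * X) := by
    rw [← mul_div_assoc]; gcongr
  have F4 : c * (c ^ (N - 1) * T) = c ^ N * T := by rw [← mul_assoc, F1]
  have F5 : c ^ N * T ≤ 3 * (m ^ N / (Real.pi * X)) := by linarith
  have F6 : 3 * (m ^ N / (Real.pi * X)) < c ^ N * T := by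
    have hcN : 0 < c ^ N := by positivity
    calc _ = c ^ N * (3 / (Real.pi * X) * (m / c) ^ N) := by
          rw [div_pow]; field_simp
      _ < _ := mul_lt_mul_of_pos_left hT hcN
  linarith

/-- The Dirichlet sum. -/
noncomputable def dir (n : ℕ) (x : ℝ) : ℂ := ∑ k : Fin n, ee ((k : ℕ) * x)

/-- Frequencies of the kernel. -/
def fr (n r : ℕ) (i : Fin r → Fin n × Fin n) : ℤ := ∑ s, (((i s).1 : ℕ) - ((i s).2 : ℕ) : ℤ)

lemma kernel_eq (n r : ℕ) (x : ℝ) :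
    (((‖dir n x‖ ^ 2) ^ r : ℝ) : ℂ) = ∑ i, ee (fr n r i * x) := by
  have h1 : ((‖dir n x‖ ^ 2 : ℝ) : ℂ) = ∑ p : Fin n × Fin n, ee ((((p.1 : ℕ) - (p.2 : ℕ) : ℤ) : ℝ) * x) := by
    push_cast
    rw [← Complex.mul_conj']
    unfold dir
    rw [map_sum, Fintype.sum_prod_type, Finset.sum_mul_sum]
    refine Finset.sum_congr rfl fun k _ => Finset.sum_congr rfl fun l _ => ?_
    rw [← ee_neg, ← ee_add]
    congr 1; ring
  rw [Complex.ofReal_pow, h1]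
  have h2 : ∀ i, ee (fr n r i * x) =
      ∏ s : Fin r, ee ((((i s).1 : ℕ) - ((i s).2 : ℕ) : ℤ) * x) := by
    intro i
    rw [← ee_sum, ← Finset.sum_mul]
    simp [fr]
  simp only [h2]
  have h3 := Finset.prod_univ_sum (fun _ : Fin r => (Finset.univ : Finset (Fin n × Fin n)))
    (fun _ p => ee ((((p.1 : ℕ) - (p.2 : ℕ) : ℤ) : ℝ) * x))
  rw [Fintype.piFinset_univ] at h3
  rw [← h3]
  simp

lemma fr_le (n r : ℕ) (i : Fin r → Fin n × Fin n) : |(fr n r i : ℝ)| ≤ n * r := by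
  unfold fr
  push_cast
  refine (Finset.abs_sum_le_sum_abs _ _).trans ?_
  calc _ ≤ ∑ s : Fin r, (n : ℝ) := by
        refine Finset.sum_le_sum fun s _ => ?_
        have h1 : (((i s).1 : ℕ) : ℝ) ≤ n := by exact_mod_cast (i s).1.2.le
        have h2 : (((i s).2 : ℕ) : ℝ) ≤ n := by exact_mod_cast (i s).2.2.le
        have h3 : (0 : ℝ) ≤ (((i s).1 : ℕ) : ℝ) := by positivity
        have h4 : (0 : ℝ) ≤ (((i s).2 : ℕ) : ℝ) := by positivity
        rw [abs_le]; constructor <;> linarith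
    _ = _ := by simp; ring

lemma continuous_dir (n : ℕ) : Continuous (dir n) := by
  unfold dir
  exact continuous_finsetSum _ fun i _ => continuous_ee.comp (by fun_prop)

/-- Upper bound away from integers. -/
lemma dir_le (n : ℕ) (x y : ℝ) (hy : 0 < y) (hx : y < nearestIntDist x) : ‖dir n x‖ ≤ 1 / (2 * y) := by
  have hpi := Real.pi_pos
  set w : ℝ := x - round x with hw
  have hw2 : |w| ≤ 1 / 2 := abs_sub_round x
  have hyw : y < |w| := hx
  have hk : ∀ k : ℕ, ee (k * x) = (ee w) ^ k := by
    intro k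
    have : ee w = ee x := by
      have : x = w + (round x : ℤ) := by rw [hw]; ring
      conv_rhs => rw [this, ee_add, ee_int, mul_one]
    rw [this]
    simp only [ee]; rw [← Complex.exp_nat_mul]; congr 1; push_cast; ring
  have h1 : dir n x * (ee w - 1) = ee w ^ n - 1 := by
    unfold dir
    simp only [hk]
    rw [Fin.sum_univ_eq_sum_range (fun k => ee w ^ k), geom_sum_mul]
  have h2 : ‖ee w ^ n - 1‖ ≤ 2 := by
    refine (norm_sub_le _ _).trans ?_
    rw [norm_pow, norm_ee]; norm_num
  have h3 : 4 * |w| ≤ ‖ee w - 1‖ := by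
    have : ‖ee w - 1‖ = ‖2 * Real.sin (2 * Real.pi * w / 2)‖ := by
      simp only [ee]
      rw [mul_comm, Complex.norm_exp_I_mul_ofReal_sub_one]
    rw [this, norm_mul, Real.norm_eq_abs, Real.norm_eq_abs]
    have h4 : 2 / Real.pi * |Real.pi * w| ≤ |Real.sin (Real.pi * w)| := by
      apply Real.mul_abs_le_abs_sin
      rw [abs_mul, abs_of_pos hpi]; nlinarith
    rw [abs_mul, abs_of_pos hpi] at h4
    have h5 : 2 / Real.pi * (Real.pi * |w|) = 2 * |w| := by field_simp
    have h6 : 2 * Real.pi * w / 2 = Real.pi * w := by ring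
    rw [h6]; norm_num; linarith
  have h7 : ‖dir n x‖ * ‖ee w - 1‖ ≤ 2 := by rw [← norm_mul, h1]; exact h2
  rw [le_div_iff₀ (by positivity)]
  have := norm_nonneg (dir n x)
  nlinarith

lemma dir_ge (n : ℕ) (x : ℝ) : (n : ℝ) ^ 2 * (1 - 20 * (n * x) ^ 2) ≤ ‖dir n x‖ ^ 2 := by
  have h0 := kernel_eq n 1 x
  have h1 : ‖dir n x‖ ^ 2 = ∑ i, Real.cos (2 * Real.pi * (fr n 1 i * x)) := by
    have := congrArg Complex.re h0
    rw [pow_one, Complex.ofReal_re, Complex.re_sum] at this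
    rw [this]
    exact Finset.sum_congr rfl fun i _ => ee_re _
  rw [h1]
  calc _ = ∑ i : Fin 1 → Fin n × Fin n, (1 - 20 * (n * x) ^ 2) := by
        simp; ring_nf
    _ ≤ _ := by
        refine Finset.sum_le_sum fun i _ => ?_
        have h2 := Real.one_sub_sq_div_two_le_cos (x := 2 * Real.pi * (fr n 1 i * x))
        have h3 := fr_le n 1 i
        have h4 : (fr n 1 i : ℝ) ^ 2 ≤ n ^ 2 := by
          rw [← sq_abs]; norm_num at h3; gcongr
        have h5 : Real.pi ^ 2 ≤ 10 := by
          have := Real.pi_lt_d2; have := Real.pi_pos; nlinarith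
        have h6 : Real.pi ^ 2 * (fr n 1 i : ℝ) ^ 2 ≤ 10 * n ^ 2 := by gcongr
        have h7 := mul_le_mul_of_nonneg_right h6 (sq_nonneg x)
        nlinarith

lemma count_ge (n r : ℕ) (hn : 0 < n) (hr : 0 < r) :
    ((n : ℝ) ^ 2) ^ r / (7 * n * Real.sqrt r) ≤
      ((Finset.univ.filter (fun i => fr n r i = 0)).card : ℝ) := by
  have hn' : (1 : ℝ) ≤ n := by exact_mod_cast hn
  have hr' : (1 : ℝ) ≤ r := by exact_mod_cast hr
  have hs1 : 1 ≤ Real.sqrt r := Real.one_le_sqrt.mpr hr'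
  have hss : Real.sqrt r ^ 2 = r := Real.sq_sqrt (by linarith)
  set s := Real.sqrt r with hs
  have e : ((Finset.univ.filter (fun i => fr n r i = 0)).card : ℝ) =
      ∫ x in (-1/2 : ℝ)..(1/2), (‖dir n x‖ ^ 2) ^ r := by
    apply Complex.ofReal_injective
    rw [← intervalIntegral.integral_ofReal]
    simp only [kernel_eq]
    rw [intervalIntegral.integral_finsetSum]
    · rw [Finset.card_filter]
      push_cast
      refine Finset.sum_congr rfl fun i _ => ?_
      split_ifs with h
      · simp [h, ee_zero]; norm_num
      · have := integral_ee (fr n r i) 0 (-1/2) (1/2) (by exact_mod_cast h)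
        simp only [add_zero] at this
        rw [this]
        have h2 : ee ((fr n r i : ℝ) * (1/2)) = ee ((fr n r i : ℝ) * (-1/2)) := by
          have : (fr n r i : ℝ) * (1/2) = (fr n r i : ℝ) * (-1/2) + (fr n r i : ℤ) := by ring
          rw [this, ee_add, ee_int, mul_one]
        rw [h2]; simp
    · intro i _
      exact Continuous.intervalIntegrable (continuous_ee.comp (by fun_prop)) _ _
  rw [e]
  set δ : ℝ := 1 / (7 * n * s) with hδ
  have hδ0 : 0 < δ := by positivity
  have hδ1 : δ ≤ 1 / 2 := by
    rw [hδ]; apply one_div_le_one_div_of_le (by norm_num); nlinarith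
  have hcont : Continuous fun x => (‖dir n x‖ ^ 2) ^ r :=
    ((continuous_dir n).norm.pow 2).pow r
  have hδn : (n * δ) ^ 2 * r = 1 / 49 := by
    rw [← hss, hδ]; field_simp; norm_num
  calc _ = ∫ x in (-δ)..δ, ((n : ℝ) ^ 2) ^ r * (1 / 2) := by
        rw [intervalIntegral.integral_const, hδ]; simp; field_simp; try ring
    _ ≤ ∫ x in (-δ)..δ, (‖dir n x‖ ^ 2) ^ r := by
        apply intervalIntegral.integral_mono_on (by linarith)
        · exact continuous_const.intervalIntegrable _ _
        · exact hcont.intervalIntegrable _ _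
        · intro x hx
          have hx2 : x ^ 2 ≤ δ ^ 2 := sq_le_sq' hx.1 hx.2
          have hb : (n * x) ^ 2 * r ≤ 1 / 49 := by
            rw [← hδn]; rw [mul_pow, mul_pow]; gcongr
          have hb1 : (n * x) ^ 2 ≤ 1 / 49 := by nlinarith [sq_nonneg (n * x)]
          calc ((n : ℝ) ^ 2) ^ r * (1 / 2) ≤ ((n : ℝ) ^ 2) ^ r * (1 + r * (-20 * (n * x) ^ 2)) := by
                gcongr; linarith
            _ ≤ ((n : ℝ) ^ 2) ^ r * (1 + (-20 * (n * x) ^ 2)) ^ r := by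
                gcongr
                exact one_add_mul_le_pow (by linarith) r
            _ = ((n : ℝ) ^ 2 * (1 - 20 * (n * x) ^ 2)) ^ r := by
                rw [← mul_pow]; ring_nf
            _ ≤ _ := by
                apply pow_le_pow_left₀ _ (dir_ge n x)
                apply mul_nonneg (by positivity); linarith
    _ ≤ _ := by
        apply intervalIntegral.integral_mono_interval (by linarith) (by linarith) hδ1
        · exact Filter.Eventually.of_forall fun x => by positivity
        · exact hcont.intervalIntegrable _ _

end LocKron

open LocKron in
theorem localized_kronecker :
    ∃ C₀ : ℝ, 0 < C₀ ∧
      ∀ N ω : ℕ, 0 < N → 0 < ω → ∀ lam : Fin N → ℝ,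
        (∀ u : Fin N → ℤ,
            (∀ ℓ, (|u ℓ| : ℝ) ≤ 6 * ω * Real.log (N * ω / C₀)) →
            (∑ ℓ, lam ℓ * u ℓ) = 0 → u = 0) →
        ∀ Ξ : ℝ,
          IsLeast {x : ℝ | ∃ u : Fin N → ℤ,
              (∀ ℓ, (|u ℓ| : ℝ) ≤ 6 * ω * Real.log (N * ω / C₀)) ∧
              (∑ ℓ, lam ℓ * u ℓ) ≠ 0 ∧ x = |∑ ℓ, lam ℓ * u ℓ|} Ξ →
          ∀ T : ℝ,
            T > 3 / (Real.pi * Ξ) *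
                ((2 * Real.sqrt 3 * ω / C₀) * Real.sqrt (Real.log (N * ω / C₀))) ^ N →
            ∀ d : ℝ, ∀ β : Fin N → ℝ,
              ∃ t ∈ Set.Icc d (d + T),
                ∀ j, nearestIntDist (t * lam j - β j) ≤ 1 / ω := by
  refine ⟨1 / 100, by norm_num, ?_⟩
  intro N ω hN hω lam hrel X hX T hT d β
  have hN' : (1 : ℝ) ≤ N := by exact_mod_cast hN
  have hω' : (1 : ℝ) ≤ ω := by exact_mod_cast hω
  have hNω : (1 : ℝ) ≤ N * ω := one_le_mul_of_one_le_of_one_le hN' hω'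
  have hX0 : 0 < X := by
    obtain ⟨u, -, hu, rfl⟩ := hX.1
    exact abs_pos.mpr hu
  set L : ℝ := Real.log (N * ω / (1 / 100)) with hL
  have hY : (N * ω / (1 / 100) : ℝ) = 100 * (N * ω) := by ring
  have hL1 : 1 ≤ L := by
    rw [hL, hY, Real.le_log_iff_exp_le (by positivity)]
    have := Real.exp_one_lt_d9
    nlinarith
  set r : ℕ := ⌈L⌉₊ with hr
  have hLr : L ≤ r := Nat.le_ceil L
  have hrL : (r : ℝ) ≤ 2 * L := by
    have := Nat.ceil_lt_add_one (a := L) (by linarith)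
    linarith
  have hr1 : (1 : ℝ) ≤ r := hL1.trans hLr
  have hr0 : 0 < r := by exact_mod_cast (by linarith : (0 : ℝ) < r)
  set n : ℕ := 2 * ω with hn
  have hn0 : 0 < n := by omega
  have hnr : (n : ℝ) = 2 * ω := by rw [hn]; push_cast; ring
  set c : ℝ := ((Finset.univ.filter (fun i => fr n r i = 0)).card : ℝ) with hc
  have hcge := count_ge n r hn0 hr0
  rw [← hc] at hcge
  set s := Real.sqrt r with hs
  have hs1 : 1 ≤ s := Real.one_le_sqrt.mpr hr1
  have hss : s ^ 2 = r := Real.sq_sqrt (by linarith)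
  have hn1 : (0 : ℝ) < n := by exact_mod_cast hn0
  have hc0 : 0 < c := lt_of_lt_of_le (by positivity) hcge
  refine main_abs (fr n r) (fun x => (‖dir n x‖ ^ 2) ^ r) (kernel_eq n r) (n * r) (by positivity)
    (fr_le n r) (((continuous_dir n).norm.pow 2).pow r) (fun x => by positivity) N hN lam X hX0 ?_
    c hc hc0 (1 / ω) ((((ω : ℝ) / 2) ^ 2) ^ r) (by positivity) ?_ ?_ T ?_ d β
  · intro v hv hv0
    have hb : ∀ ℓ, |(v ℓ : ℝ)| ≤ 6 * ω * L := by
      intro ℓ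
      refine (hv ℓ).trans ?_
      rw [hnr]
      have : (ω : ℝ) * r ≤ ω * (2 * L) := by gcongr
      have : 0 ≤ (ω : ℝ) * L := by positivity
      nlinarith
    exact hX.2 ⟨v, hb, fun h0 => hv0 (hrel v hb h0), rfl⟩
  · have h1 : 100 * (N * ω : ℝ) ≤ 4 ^ r := by
      have h2 : Real.exp L = 100 * (N * ω : ℝ) := by
        rw [hL, hY, Real.exp_log (by positivity)]
      rw [← h2]
      calc Real.exp L ≤ Real.exp r := Real.exp_le_exp.mpr hLr
        _ = Real.exp 1 ^ r := by rw [← Real.exp_nat_mul, mul_one]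
        _ ≤ 4 ^ r := by
          have := Real.exp_one_lt_d9
          gcongr; linarith
    have h3 : s ≤ 4 ^ r := by
      have : (r : ℝ) ≤ 4 ^ r := by exact_mod_cast (Nat.lt_pow_self (by norm_num : 1 < 4)).le
      nlinarith
    have h4 : (N : ℝ) * (28 * ω * s) ≤ 16 ^ r := by
      have e16 : (16 : ℝ) ^ r = 4 ^ r * 4 ^ r := by rw [← mul_pow]; norm_num
      rw [e16]
      calc (N : ℝ) * (28 * ω * s) = (28 * (N * ω)) * s := by ring
        _ ≤ 4 ^ r * 4 ^ r := by
          apply mul_le_mul _ h3 (by positivity) (by positivity)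
          linarith
    have h5 : ((n : ℝ) ^ 2) ^ r = 16 ^ r * (((ω : ℝ) / 2) ^ 2) ^ r := by
      rw [← mul_pow, hnr]; congr 1; ring
    have h6 : (N : ℝ) * (((ω : ℝ) / 2) ^ 2) ^ r ≤ (((n : ℝ) ^ 2) ^ r / (7 * n * s)) / 2 := by
      rw [h5, hnr, div_div, le_div_iff₀ (by positivity)]
      have h7 := mul_le_mul_of_nonneg_right h4 (by positivity : 0 ≤ (((ω : ℝ) / 2) ^ 2) ^ r)
      linarith
    linarith
  · intro x hx
    have := dir_le n x (1 / ω) (by positivity) hx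
    have e : (1 : ℝ) / (2 * (1 / ω)) = ω / 2 := by field_simp
    rw [e] at this
    show (‖dir n x‖ ^ 2) ^ r ≤ _
    gcongr
  · refine lt_of_le_of_lt ?_ hT
    have hcard : (Fintype.card (Fin r → Fin n × Fin n) : ℝ) = ((n : ℝ) ^ 2) ^ r := by
      simp; ring
    rw [hcard]
    have hpi := Real.pi_pos
    gcongr
    have hsL : s ≤ 2 * Real.sqrt L := by
      rw [hs]
      apply Real.sqrt_le_iff.mpr ⟨by positivity, ?_⟩
      rw [mul_pow, Real.sq_sqrt (by linarith)]; linarith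
    have h3 : 1 ≤ Real.sqrt 3 := Real.one_le_sqrt.mpr (by norm_num)
    calc ((n : ℝ) ^ 2) ^ r / c ≤ 7 * n * s := by
          rw [div_le_iff₀ hc0]
          rw [div_le_iff₀ (by positivity)] at hcge
          linarith
      _ ≤ 7 * n * (2 * Real.sqrt L) := by gcongr
      _ = 28 * ω * Real.sqrt L := by rw [hnr]; ring
      _ ≤ _ := by
          gcongr
          rw [le_div_iff₀ (by norm_num)]
          nlinarith
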